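/- arXiv:1901.01589 — 6 statements merged into one kernel-verified Lean document; each statement's English description precedes it below -/
import Mathlib

section
/- A W-linear endomorphism M of D satisfies M ∘ F = F ∘ M if and only if there exist a, b ∈ W with σ²(a) = a and σ²(b) = b such that M(e₁) = a·e₁ + b·e₂ and M(e₂) = p·σ(b)·e₁ + σ(a)·e₂. -/
/-- Let `p` be an odd prime, `k` an algebraically closed field of
characteristic `p`, `W = 𝕎(k)` the Witt vectors, `σ` the Witt vector Frobenius.
Let `D = W ⊕ W` with basis `e₁ = (1,0)`, `e₂ = (0,1)` and let `F : D → D` be the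
`σ`-semilinear map with `F e₁ = e₂`, `F e₂ = p • e₁` (so `F (x, y) = (p * σ y, σ x)`).
A `W`-linear endomorphism `M` of `D` commutes with `F` iff there exist `a b ∈ W` fixed by
`σ²` with `M e₁ = a • e₁ + b • e₂` and `M e₂ = p σ(b) • e₁ + σ(a) • e₂`. -/
theorem stmt0 (p : ℕ) [Fact p.Prime] (hp : Odd p)
    (k : Type*) [Field k] [CharP k p] [IsAlgClosed k]
    (σ : WittVector p k →+* WittVector p k) (hσ : σ = WittVector.frobenius)
    (F : WittVector p k × WittVector p k → WittVector p k × WittVector p k)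
    (hF : ∀ x y : WittVector p k, F (x, y) = ((p : WittVector p k) * σ y, σ x))
    (M : (WittVector p k × WittVector p k) →ₗ[WittVector p k]
      (WittVector p k × WittVector p k)) :
    (∀ d, M (F d) = F (M d)) ↔
      ∃ a b : WittVector p k, σ (σ a) = a ∧ σ (σ b) = b ∧
        M (1, 0) = (a, b) ∧ M (0, 1) = ((p : WittVector p k) * σ b, σ a) := by
  have hM : ∀ x y : WittVector p k, M (x, y) = x • M (1, 0) + y • M (0, 1) := by
    intro x y
    rw [← map_smul, ← map_smul, ← map_add]
    simp
  have hp0 : (p : WittVector p k) ≠ 0 := WittVector.p_nonzero p k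
  clear hσ
  constructor
  · intro h
    rcases hab : M (1, 0) with ⟨a, b⟩
    have h1 := h (1, 0)
    rw [hF, hab, hF] at h1
    simp only [map_zero, map_one, mul_zero] at h1
    have h2 := h (0, 1)
    rw [hF, h1, hF, hM, hab] at h2
    simp only [map_zero, map_one, mul_one, map_mul, map_natCast, zero_smul, add_zero,
      Prod.smul_mk, smul_eq_mul, Prod.mk.injEq] at h2
    exact ⟨a, b, (mul_left_cancel₀ hp0 h2.1).symm, (mul_left_cancel₀ hp0 h2.2).symm, rfl, h1⟩
  · rintro ⟨a, b, ha, hb, h1, h2⟩ ⟨x, y⟩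
    rw [hF, hM, hM x y, h1, h2]
    simp only [Prod.smul_mk, smul_eq_mul, Prod.mk_add_mk, hF, map_add, map_mul, map_natCast,
      ha, hb, Prod.mk.injEq]
    constructor <;> ring
end

section
/- Let a, b ∈ W with σ(a) = −a, a a unit of W, and b ≠ 0. Then the quadratic polynomial f(X) = b·X² + (σ(a) − a)·X − p·σ(b) splits into linear factors over K: f = b·(X − λ)·(X − μ) with λ ∈ W, v(λ) = 1 + v(b), and v(μ) = −v(b). In particular, λ is the unique root of f in K of positive valuation. -/
theorem aux_hensel (p : ℕ) [Fact p.Prime] (k : Type*) [Field k] [CharP k p] [IsAlgClosed k]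
    (c q w : WittVector p k) (hc : IsUnit c) (hq : (p : WittVector p k) ∣ q) (hw : IsUnit w) :
    ∃ s : WittVector p k, IsUnit s ∧ w * s ^ 2 - c * s - q = 0 := by
  have : PerfectRing k p := inferInstance
  obtain ⟨w, rfl⟩ := hw
  obtain ⟨c, rfl⟩ := hc
  set I := Ideal.span {(p : WittVector p k)} with hI
  have : HenselianRing (WittVector p k) I := inferInstance
  let d : WittVector p k := ↑w⁻¹ * ↑c
  have hd : IsUnit d := (w⁻¹ * c).isUnit
  let e : WittVector p k := ↑w⁻¹ * q
  obtain ⟨s, hs, hs'⟩ := HenselianRing.is_henselian (I := I)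
    (Polynomial.X ^ 2 - (Polynomial.C d * Polynomial.X + Polynomial.C e))
    (by
      apply Polynomial.monic_X_pow_sub
      compute_degree
      norm_num) d
    (by
      have : -e ∈ I := by
        rw [hI, Ideal.mem_span_singleton]
        exact (dvd_neg.2 (hq.mul_left _))
      convert this using 1
      simp
      ring)
    (by
      apply IsUnit.map
      convert hd using 1
      simp
      ring)
  refine ⟨s, ?_, ?_⟩
  · apply WittVector.isUnit_of_coeff_zero_ne_zero
    rw [hI, WittVector.mem_span_p_iff_coeff_zero_eq_zero] at hs'
    have h1 : WittVector.constantCoeff (s - d) = 0 := hs'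
    rw [map_sub, sub_eq_zero] at h1
    have h2 := hd.map (WittVector.constantCoeff : WittVector p k →+* k)
    rw [← h1] at h2
    exact h2.ne_zero
  · simp [Polynomial.IsRoot] at hs
    have hw : (w : WittVector p k) * ↑w⁻¹ = 1 := w.mul_inv
    linear_combination (w : WittVector p k) * hs + (c * s + q) * hw

theorem aux_fac {K : Type*} [Field K] (B L M c q N : K) (hM : M * B = N)
    (h1 : B * L + N = -c) (h2 : L * N = -q) :
    Polynomial.C B * Polynomial.X ^ 2 + Polynomial.C c * Polynomial.X - Polynomial.C q
      = Polynomial.C B * (Polynomial.X - Polynomial.C L) * (Polynomial.X - Polynomial.C M) := by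
  have h1 : c = -(B * L + M * B) := by rw [hM, h1, neg_neg]
  have h2 : q = -(L * (M * B)) := by rw [hM, h2, neg_neg]
  rw [h1, h2]
  simp only [Polynomial.C_neg, Polynomial.C_add, Polynomial.C_mul]
  ring

theorem aux_ring {R : Type*} [CommRing R] (P u w c s t : R) (m : ℕ) (hst : s * t = 1)
    (hs : w * s ^ 2 - c * s - u * P ^ (2 * m + 1) = 0) :
    P ^ m * u * (P ^ (m + 1) * t) + -(w * s) = -c ∧
    (P ^ (m + 1) * t) * (-(w * s)) = -(P * (P ^ m * w)) := by
  constructor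
  · linear_combination (-t) * hs + (w * s - c) * hst
  · linear_combination (-P ^ (m + 1) * w) * hst

open Polynomial in
/-- Let `W = 𝕎(k)` (`k` algebraically closed of odd characteristic `p`),
`σ` the Witt Frobenius, `K = Frac(W)`, and `v` the normalized discrete valuation on `K`
(characterized by multiplicativity, `v p = 1`, `v u = 0` for units `u` of `W`, and
`v x = ⊤ ↔ x = 0`).  Let `a, b ∈ W` with `σ a = -a`, `a` a unit, `b ≠ 0`.  Then
`f(X) = b X² + (σ(a) - a) X - p σ(b)` splits over `K` as `b (X - λ)(X - μ)` with `λ ∈ W`,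
`v λ = 1 + v b`, `v μ = -v b` (i.e. `v μ + v b = 0`); and `λ` is the unique root of `f`
in `K` of positive valuation. -/
theorem stmt2 (p : ℕ) [Fact p.Prime] (hp : Odd p)
    (k : Type*) [Field k] [CharP k p] [IsAlgClosed k]
    (σ : WittVector p k →+* WittVector p k) (hσ : σ = WittVector.frobenius)
    (K : Type*) [Field K] [Algebra (WittVector p k) K]
    [IsFractionRing (WittVector p k) K]
    (v : K → WithTop ℤ)
    (hv0 : ∀ x : K, v x = ⊤ ↔ x = 0)
    (hvmul : ∀ x y : K, v (x * y) = v x + v y)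
    (hvp : v (algebraMap (WittVector p k) K p) = 1)
    (hvu : ∀ u : WittVector p k, IsUnit u → v (algebraMap (WittVector p k) K u) = 0)
    (a b : WittVector p k) (haneg : σ a = -a) (haunit : IsUnit a) (hb : b ≠ 0) :
    ∃ lam mu : K,
      (∃ w : WittVector p k, algebraMap (WittVector p k) K w = lam) ∧
      (C (algebraMap (WittVector p k) K b) * X ^ 2
          + C (algebraMap (WittVector p k) K (σ a - a)) * X
          - C (algebraMap (WittVector p k) K ((p : WittVector p k) * σ b))
        = C (algebraMap (WittVector p k) K b) * (X - C lam) * (X - C mu)) ∧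
      v lam = 1 + v (algebraMap (WittVector p k) K b) ∧
      v mu + v (algebraMap (WittVector p k) K b) = 0 ∧
      (∀ x : K,
        (C (algebraMap (WittVector p k) K b) * X ^ 2
            + C (algebraMap (WittVector p k) K (σ a - a)) * X
            - C (algebraMap (WittVector p k) K ((p : WittVector p k) * σ b))).IsRoot x →
        0 < v x → x = lam) := by
  have : PerfectRing k p := inferInstance
  obtain ⟨m, u, hbu⟩ := WittVector.exists_eq_pow_p_mul' b hb
  have h2 : IsUnit (2 : WittVector p k) := by
    apply WittVector.isUnit_of_coeff_zero_ne_zero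
    change WittVector.constantCoeff (2 : WittVector p k) ≠ 0
    rw [map_ofNat]
    intro h
    have h' : ((2 : ℕ) : k) = 0 := by exact_mod_cast h
    rw [CharP.cast_eq_zero_iff k p] at h'
    have := (Nat.prime_dvd_prime_iff_eq (Fact.out : p.Prime) Nat.prime_two).1 h'
    subst this
    exact absurd hp (by decide)
  have hc : IsUnit (σ a - a) := by
    have : σ a - a = -(2 * a) := by rw [haneg]; ring
    rw [this]
    exact (h2.mul haunit).neg
  have hw : IsUnit (σ u) := u.isUnit.map σ
  obtain ⟨s, ⟨s, rfl⟩, hs⟩ := aux_hensel p k (σ a - a) (u * p ^ (2 * m + 1)) (σ u) hc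
    (Dvd.dvd.mul_left (dvd_pow_self _ (by omega)) _) hw
  have hσb : σ b = p ^ m * σ u := by rw [hbu]; simp
  generalize σ u = w at *
  generalize σ a - a = c at *
  rw [hσb]
  set φ := algebraMap (WittVector p k) K with hφ
  have hinj : Function.Injective φ := IsFractionRing.injective _ _
  have hb' : φ b ≠ 0 := by
    rw [← map_zero φ]; exact hinj.ne hb
  have hpow : ∀ n : ℕ, v (φ (p ^ n)) = ((n : ℤ) : WithTop ℤ) := by
    intro n
    induction n with
    | zero => simpa using hvu 1 isUnit_one
    | succ n ih => rw [pow_succ, map_mul, hvmul, ih, hvp]; push_cast; rfl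
  have hvb : v (φ b) = ((m : ℤ) : WithTop ℤ) := by
    rw [hbu, map_mul, hvmul, hpow, hvu _ u.isUnit, add_zero]
  have hmub : φ (-(w * s)) / φ b * φ b = φ (-(w * s)) := div_mul_cancel₀ _ hb'
  have hvmu : v (φ (-(w * s)) / φ b) + v (φ b) = 0 := by
    rw [← hvmul, hmub]
    exact hvu _ (hw.mul s.isUnit).neg
  have hss : (s : WittVector p k) * ↑s⁻¹ = 1 := s.mul_inv
  have hsum : φ b * φ (p ^ (m + 1) * ↑s⁻¹) + φ (-(w * s)) = - φ c := by
    rw [← map_mul, ← map_add, ← map_neg, hbu]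
    exact congrArg φ (aux_ring _ _ _ _ _ _ m hss hs).1
  have hprod : φ (p ^ (m + 1) * ↑s⁻¹) * φ (-(w * s)) = - φ (p * (p ^ m * w)) := by
    rw [← map_mul, ← map_neg]
    exact congrArg φ (aux_ring _ _ _ _ _ _ m hss hs).2
  have hfac : C (φ b) * X ^ 2 + C (φ c) * X - C (φ (p * (p ^ m * w)))
      = C (φ b) * (X - C (φ (p ^ (m + 1) * ↑s⁻¹))) * (X - C (φ (-(w * s)) / φ b)) :=
    aux_fac _ _ _ _ _ _ hmub hsum hprod
  refine ⟨φ (p ^ (m + 1) * ↑s⁻¹), φ (-(w * s)) / φ b, ⟨_, rfl⟩, hfac, ?_, hvmu, ?_⟩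
  · rw [map_mul, hvmul, hpow, hvu _ s⁻¹.isUnit, hvb, add_zero, add_comm]
    push_cast; rfl
  · intro x hx hpos
    rw [hfac] at hx
    simp only [IsRoot, eval_mul, eval_sub, eval_C, eval_X, mul_eq_zero, hb', false_or,
      sub_eq_zero] at hx
    rcases hx with hx | hx
    · exact hx
    · exfalso
      rw [← hx, hvb] at hvmu
      have : (0 : WithTop ℤ) ≤ ((m : ℤ) : WithTop ℤ) := by exact_mod_cast Int.natCast_nonneg m
      have := add_pos_of_pos_of_nonneg hpos this
      rw [hvmu] at this
      exact lt_irrefl _ this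
end

section
/- Let a, b ∈ W with σ(a) = −a, v(a) ≥ 1, and b a unit of W. Then the quadratic polynomial f(X) = b·X² + (σ(a) − a)·X − p·σ(b) is irreducible over K. Moreover, f has a root in the quadratic extension L = K[Y]/(Y² − p), and every root c ∈ L of f satisfies: both c²/p and p/c² are integral over W (so c has valuation 1/2 in the unique extension of v to L). -/
theorem aux_quad {R S : Type*} [CommRing R] [CommRing S] [Algebra R S] (m n : R) (u : S)
    (h : u ^ 2 + algebraMap R S m * u + algebraMap R S n = 0) : IsIntegral R u := by
  nontriviality R
  refine ⟨Polynomial.X ^ 2 + (Polynomial.C m * Polynomial.X + Polynomial.C n), ?_, ?_⟩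
  · apply Polynomial.monic_X_pow_add
    refine lt_of_le_of_lt Polynomial.degree_linear_le ?_
    norm_num
  · simp only [Polynomial.eval₂_add, Polynomial.eval₂_mul, Polynomial.eval₂_pow,
      Polynomial.eval₂_X, Polynomial.eval₂_C]
    rw [← h]; ring

theorem aux_integ {R S : Type*} [CommRing R] [CommRing S] [Algebra R S] (q a b d : R)
    (hb : IsUnit b) (hd : IsUnit d) (hq : IsUnit (algebraMap R S q)) (c : S)
    (h : algebraMap R S b * c ^ 2 - 2 * algebraMap R S q * algebraMap R S a * c
      - algebraMap R S q * algebraMap R S d = 0) :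
    (∃ u, IsIntegral R u ∧ algebraMap R S q * u = c ^ 2) ∧
    (∃ w, IsIntegral R w ∧ c ^ 2 * w = algebraMap R S q) := by
  obtain ⟨bi, hbi⟩ := hb.exists_right_inv
  obtain ⟨di, hdi⟩ := hd.exists_right_inv
  obtain ⟨Q, hQ⟩ := hq.exists_right_inv
  obtain ⟨u, hu⟩ : ∃ u, u = Q * c ^ 2 := ⟨_, rfl⟩
  have hbi' : algebraMap R S b * algebraMap R S bi = 1 := by rw [← map_mul, hbi, map_one]
  have hdi' : algebraMap R S d * algebraMap R S di = 1 := by rw [← map_mul, hdi, map_one]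
  have hqu : algebraMap R S q * u = c ^ 2 := by
    rw [hu]; linear_combination c ^ 2 * hQ
  generalize hA : algebraMap R S a = A at *
  generalize hB : algebraMap R S b = B at *
  generalize hD : algebraMap R S d = D at *
  generalize hP : algebraMap R S q = P at *
  generalize hBi : algebraMap R S bi = Bi at *
  generalize hDi : algebraMap R S di = Di at *
  have e1 : B * u - D = 2 * A * c := by
    linear_combination Q * h + (- B * u + D + 2 * A * c) * hQ + Q * B * hqu
  have e2 : B ^ 2 * u ^ 2 - (2 * B * D + 4 * A ^ 2 * P) * u + D ^ 2 = 0 := by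
    linear_combination (B * u - D + 2 * A * c) * e1 - 4 * A ^ 2 * hqu
  have iu : IsIntegral R u := by
    apply aux_quad (-(bi ^ 2 * (2 * b * d + 4 * a ^ 2 * q))) (bi ^ 2 * d ^ 2)
    simp only [map_neg, map_mul, map_add, map_pow, map_ofNat, hA, hB, hD, hP, hBi]
    linear_combination Bi ^ 2 * e2 - u ^ 2 * (B * Bi + 1) * hbi'
  refine ⟨⟨u, iu, hqu⟩, algebraMap R S (di ^ 2) * (algebraMap R S (2 * b * d + 4 * a ^ 2 * q)
    - algebraMap R S (b ^ 2) * u), ?_, ?_⟩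
  · exact isIntegral_algebraMap.mul (isIntegral_algebraMap.sub (isIntegral_algebraMap.mul iu))
  · simp only [map_mul, map_add, map_pow, map_ofNat, hA, hB, hD, hP, hDi]
    rw [← hqu]
    linear_combination (-P * Di ^ 2) * e2 + P * (D * Di + 1) * hdi'

theorem aux_sqrt (p : ℕ) [Fact p.Prime] (hp : Odd p)
    (k : Type*) [Field k] [CharP k p] [IsAlgClosed k] (u : WittVector p k) (hu : IsUnit u) :
    ∃ s, s ^ 2 = u := by
  obtain ⟨z, hz⟩ := IsAlgClosed.exists_pow_nat_eq (WittVector.constantCoeff u) (n := 2) (by norm_num)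
  obtain ⟨s0, hs0⟩ := WittVector.constantCoeff_surjective p z
  have hz0 : z ≠ 0 := by
    rintro rfl
    have := hu.map (WittVector.constantCoeff (p := p) (R := k))
    rw [← hz] at this
    simp at this
  have h2 : (2 : k) ≠ 0 := by
    intro h
    have h' : ((2 : ℕ) : k) = 0 := by exact_mod_cast h
    rw [CharP.cast_eq_zero_iff k p] at h'
    have := (Nat.prime_dvd_prime_iff_eq Fact.out Nat.prime_two).1 h'
    subst this
    revert hp; decide
  obtain ⟨s, hs, -⟩ := HenselianRing.is_henselian (I := Ideal.span {(p : WittVector p k)})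
    (Polynomial.X ^ 2 - Polynomial.C u) (Polynomial.monic_X_pow_sub_C u (by norm_num)) s0
    (by
      rw [← WittVector.ker_constantCoeff, RingHom.mem_ker]
      simp [hs0, hz, -WittVector.constantCoeff_apply])
    (by
      apply IsUnit.map
      have : (2 * s0 : WittVector p k).coeff 0 ≠ 0 := by
        rw [← WittVector.constantCoeff_apply, map_mul, hs0, map_ofNat]
        exact mul_ne_zero h2 hz0
      simpa [one_add_one_eq_two] using WittVector.isUnit_of_coeff_zero_ne_zero _ this)
  refine ⟨s, ?_⟩
  simpa [sub_eq_zero] using hs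

open Polynomial in
theorem aux_irr {R : Type*} [CommRing R] [IsDomain R] [IsIntegrallyClosed R] (K : Type*) [Field K]
    [Algebra R K] [IsFractionRing R K] (q a b d : R) (hq : Prime q) (hb : IsUnit b)
    (hd : IsUnit d) :
    Irreducible (C (algebraMap R K b) * X ^ 2 + C (algebraMap R K (q * a)) * X
      - C (algebraMap R K (q * d))) := by
  obtain ⟨bi, hbi⟩ := hb.exists_right_inv
  have hm : (X ^ 2 + (C (q * (bi * a)) * X + C (-(q * (bi * d)))) : R[X]).Monic := by
    apply Polynomial.monic_X_pow_add
    refine lt_of_le_of_lt Polynomial.degree_linear_le ?_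
    norm_num
  have hdeg : (X ^ 2 + (C (q * (bi * a)) * X + C (-(q * (bi * d)))) : R[X]).degree = 2 := by
    compute_degree!
  have key : Irreducible (X ^ 2 + (C (q * (bi * a)) * X + C (-(q * (bi * d)))) : R[X]) := by
    have hP : (Ideal.span {q}).IsPrime := (Ideal.span_singleton_prime hq.ne_zero).2 hq
    refine irreducible_of_eisenstein_criterion hP ?_ ?_ ?_ ?_ hm.isPrimitive
    · rw [hm.leadingCoeff]
      exact fun h => hP.ne_top ((Ideal.eq_top_iff_one _).2 h)
    · intro n hn
      rw [hdeg] at hn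
      have hn' : n < 2 := by exact_mod_cast hn
      rw [Ideal.mem_span_singleton]
      interval_cases n
      · simp [coeff_X]
      · simp [coeff_X, coeff_C]
    · rw [hdeg]; norm_num
    · rw [Ideal.span_singleton_pow, Ideal.mem_span_singleton]
      simp only [coeff_add, coeff_X_pow, coeff_C_mul, coeff_X, coeff_C]
      norm_num
      rw [pow_two, mul_dvd_mul_iff_left hq.ne_zero]
      intro h
      exact hq.not_unit (isUnit_of_dvd_unit h ((IsUnit.of_mul_eq_one b (by rw [mul_comm, hbi])).mul hd))
  rw [hm.irreducible_iff_irreducible_map_fraction_map (K := K)] at key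
  have hbK : IsUnit (C (algebraMap R K b)) := (hb.map _).map _
  rw [← irreducible_isUnit_mul hbK] at key
  have hbi' : C (algebraMap R K b) * C (algebraMap R K bi) = 1 := by
    rw [← C_mul, ← map_mul, hbi, map_one, C_1]
  convert! key using 1
  simp only [Polynomial.map_add, Polynomial.map_neg, Polynomial.map_mul, Polynomial.map_pow, map_X, map_C, map_mul,
    map_neg]
  linear_combination (-C (algebraMap R K q) * C (algebraMap R K a) * X
    + C (algebraMap R K q) * C (algebraMap R K d)) * hbi'

open Polynomial in
/-- Let `W = 𝕎(k)` (`k` algebraically closed of odd characteristic `p`),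
`σ` the Witt Frobenius, `K = Frac(W)`.  Let `a, b ∈ W` with `σ a = -a`, `v(a) ≥ 1`
(i.e. `p ∣ a`), and `b` a unit of `W`.  Then `f(X) = b X² + (σ(a) - a) X - p σ(b)` is
irreducible over `K`; it has a root in `L = K[Y]/(Y² - p)`, and every root `c ∈ L` of `f`
satisfies: both `c²/p` and `p/c²` are integral over `W` (phrased division-free: there are
integral `u, w ∈ L` with `p·u = c²` and `c²·w = p`). -/
theorem stmt3 (p : ℕ) [Fact p.Prime] (hp : Odd p)
    (k : Type*) [Field k] [CharP k p] [IsAlgClosed k]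
    (σ : WittVector p k →+* WittVector p k) (hσ : σ = WittVector.frobenius)
    (K : Type*) [Field K] [Algebra (WittVector p k) K]
    [IsFractionRing (WittVector p k) K]
    (a b : WittVector p k) (haneg : σ a = -a)
    (ha : (p : WittVector p k) ∣ a) (hbunit : IsUnit b) :
    Irreducible
      (C (algebraMap (WittVector p k) K b) * X ^ 2
        + C (algebraMap (WittVector p k) K (σ a - a)) * X
        - C (algebraMap (WittVector p k) K ((p : WittVector p k) * σ b))) ∧
    (∃ c : AdjoinRoot (X ^ 2 - C (algebraMap (WittVector p k) K (p : WittVector p k))),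
      Polynomial.aeval c
        (C (algebraMap (WittVector p k) K b) * X ^ 2
          + C (algebraMap (WittVector p k) K (σ a - a)) * X
          - C (algebraMap (WittVector p k) K ((p : WittVector p k) * σ b))) = 0) ∧
    (∀ c : AdjoinRoot (X ^ 2 - C (algebraMap (WittVector p k) K (p : WittVector p k))),
      Polynomial.aeval c
        (C (algebraMap (WittVector p k) K b) * X ^ 2
          + C (algebraMap (WittVector p k) K (σ a - a)) * X
          - C (algebraMap (WittVector p k) K ((p : WittVector p k) * σ b))) = 0 →
      (∃ u, IsIntegral (WittVector p k) u ∧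
        algebraMap K _ (algebraMap (WittVector p k) K (p : WittVector p k)) * u = c ^ 2) ∧
      (∃ w, IsIntegral (WittVector p k) w ∧
        c ^ 2 * w = algebraMap K _ (algebraMap (WittVector p k) K (p : WittVector p k)))) := by
  have hd : IsUnit (σ b) := hbunit.map σ
  obtain ⟨a', rfl⟩ := ha
  have hirr : Irreducible (p : WittVector p k) := WittVector.irreducible p
  have hs : σ ((p : WittVector p k) * a') - p * a' = p * (-2 * a') := by rw [haneg]; ring
  rw [hs]
  have hp0 : algebraMap (WittVector p k) K (p : WittVector p k) ≠ 0 := by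
    simpa using (map_ne_zero_iff _ (IsFractionRing.injective (WittVector p k) K)).2 hirr.ne_zero
  refine ⟨aux_irr K _ _ _ _ hirr.prime hbunit hd, ?_, ?_⟩
  · have hu : IsUnit (p * a' ^ 2 + b * σ b) := by
      apply WittVector.isUnit_of_coeff_zero_ne_zero
      have h := (hbunit.mul hd).map (WittVector.constantCoeff (p := p) (R := k))
      rw [← WittVector.constantCoeff_apply]
      have h0 : (WittVector.constantCoeff (p := p) (R := k)) p = 0 := by
        rw [map_natCast]; simp
      rw [map_add, map_mul, h0, zero_mul, zero_add]
      exact h.ne_zero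
    obtain ⟨s, hs⟩ := aux_sqrt p hp k _ hu
    obtain ⟨bi, hbi⟩ := hbunit.exists_right_inv
    let φ : WittVector p k →+* AdjoinRoot (X ^ 2 - C (algebraMap (WittVector p k) K (p : WittVector p k))) :=
      (algebraMap K _).comp (algebraMap (WittVector p k) K)
    have hφ : ∀ x, algebraMap K (AdjoinRoot (X ^ 2 - C (algebraMap (WittVector p k) K (p : WittVector p k)))) (algebraMap (WittVector p k) K x) = φ x := fun _ => rfl
    have hy : (AdjoinRoot.root (X ^ 2 - C (algebraMap (WittVector p k) K (p : WittVector p k)))) ^ 2 = φ p := by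
      have := AdjoinRoot.eval₂_root (X ^ 2 - C (algebraMap (WittVector p k) K (p : WittVector p k)))
      rw [eval₂_sub, eval₂_pow, eval₂_X, eval₂_C, sub_eq_zero] at this
      exact this
    generalize AdjoinRoot.root (X ^ 2 - C (algebraMap (WittVector p k) K (p : WittVector p k))) = y at hy
    refine ⟨φ bi * (φ (p * a') + φ s * y), ?_⟩
    have hs' := congrArg φ hs
    have hbi' := congrArg φ hbi
    simp only [map_sub, map_add, map_mul, aeval_C, aeval_X, map_pow, hφ, map_neg, map_ofNat,
      map_one] at hs' hbi' ⊢
    generalize φ bi = Bi at *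
    generalize φ b = B at *
    generalize φ (σ b) = D at *
    generalize φ s = S at *
    generalize φ a' = A at *
    generalize φ (p : WittVector p k) = P at *
    linear_combination (Bi * (P * A + S * y) ^ 2 + P * D) * hbi' + Bi * S ^ 2 * hy + Bi * P * hs'
  · intro c hc
    have ht : ∀ x, algebraMap K (AdjoinRoot (X ^ 2 - C (algebraMap (WittVector p k) K (p : WittVector p k)))) (algebraMap (WittVector p k) K x) = algebraMap (WittVector p k) _ x :=
      fun x => (IsScalarTower.algebraMap_apply _ _ _ x).symm
    simp only [ht]
    refine aux_integ _ a' b (σ b) hbunit hd ?_ c ?_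
    · rw [← ht]
      exact (IsUnit.mk0 _ hp0).map _
    · simp only [map_sub, map_add, map_mul, aeval_C, aeval_X, map_pow, ht, map_neg,
        map_ofNat] at hc
      linear_combination hc
end

section
/- Let R ⊆ K be a subring with c(R) = R, and let L, I, J be ℤ-submodules of K satisfying R·L ⊆ L, R·I ⊆ I, R·J ⊆ J, I·J = R, and c(I) = I. Then the dual of the product satisfies (I·L)* = J·L*. -/
/-- The dual lattice `M* = {x ∈ K : Tr_{K/ℚ}(λ·x·c(y)) ∈ ℤ for all y ∈ M}` of a
`ℤ`-submodule `M` of a number field `K`, with respect to the pairing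
`(x, y) ↦ Tr_{K/ℚ}(λ·x·c(y))`. -/
noncomputable def dualLattice (K : Type*) [Field K] [Algebra ℚ K] [FiniteDimensional ℚ K]
    (c : K →ₐ[ℚ] K) (lam : K) (M : Submodule ℤ K) : Submodule ℤ K :=
  ⨅ y ∈ M, Submodule.comap
    (((Algebra.trace ℚ K).restrictScalars ℤ) ∘ₗ LinearMap.mulLeft ℤ (lam * c y))
    (Submodule.span ℤ {(1 : ℚ)})

theorem mem_dualLattice_iff (K : Type*) [Field K] [Algebra ℚ K] [FiniteDimensional ℚ K]
    (c : K →ₐ[ℚ] K) (lam : K) (M : Submodule ℤ K) (x : K) :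
    x ∈ dualLattice K c lam M ↔
      ∀ y ∈ M, Algebra.trace ℚ K (lam * c y * x) ∈ Submodule.span ℤ {(1 : ℚ)} := by
  simp only [dualLattice, Submodule.mem_iInf, Submodule.mem_comap]
  rfl

/-- Let `K` be a number field, `c` a `ℚ`-algebra involution of `K`,
`λ ∈ K` nonzero.  Let `R ⊆ K` be a subring (a `ℤ`-submodule containing `1` and closed
under multiplication) with `c(R) = R`, and let `L, I, J` be `ℤ`-submodules of `K` with
`R·L ⊆ L`, `R·I ⊆ I`, `R·J ⊆ J`, `I·J = R` and `c(I) = I`.  Then `(I·L)* = J·L*`. -/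
theorem stmt8 (K : Type*) [Field K] [NumberField K]
    (c : K →ₐ[ℚ] K) (hc : ∀ x : K, c (c x) = x) (lam : K) (hlam : lam ≠ 0)
    (R : Submodule ℤ K) (hR1 : (1 : K) ∈ R) (hRmul : R * R ≤ R)
    (hcR : R.map (c.toLinearMap.restrictScalars ℤ) = R)
    (L I J : Submodule ℤ K)
    (hRL : R * L ≤ L) (hRI : R * I ≤ I) (hRJ : R * J ≤ J)
    (hIJ : I * J = R)
    (hcI : I.map (c.toLinearMap.restrictScalars ℤ) = I) :
    dualLattice K c lam (I * L) = J * dualLattice K c lam L := by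
  have hcI' : ∀ i ∈ I, c i ∈ I := fun i hi => by
    have h := Submodule.mem_map_of_mem (f := c.toLinearMap.restrictScalars ℤ) hi
    rw [hcI] at h
    exact h
  have hcR' : ∀ i ∈ R, c i ∈ R := fun i hi => by
    have h := Submodule.mem_map_of_mem (f := c.toLinearMap.restrictScalars ℤ) hi
    rw [hcR] at h
    exact h
  apply le_antisymm
  · have h1 : I * dualLattice K c lam (I * L) ≤ dualLattice K c lam L := by
      rw [Submodule.mul_le]
      intro i hi x hx
      rw [mem_dualLattice_iff] at hx ⊢
      intro l hl
      have h := hx (c i * l) (Submodule.mul_mem_mul (hcI' i hi) hl)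
      rw [map_mul c, hc] at h
      convert h using 2
      ring
    intro x hx
    have h2 : (1 : K) * x ∈ R * dualLattice K c lam (I * L) := Submodule.mul_mem_mul hR1 hx
    rw [one_mul, ← hIJ, mul_comm I J, mul_assoc] at h2
    exact (Submodule.mul_le.2 fun a ha b hb => Submodule.mul_mem_mul ha (h1 hb)) h2
  · rw [Submodule.mul_le]
    intro j hj x hx
    rw [mem_dualLattice_iff] at hx ⊢
    intro y hy
    induction hy using Submodule.mul_induction_on' with
    | mem_mul_mem i hi l hl =>
      have hr : c i * j ∈ R := hIJ ▸ Submodule.mul_mem_mul (hcI' i hi) hj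
      have h := hx (c (c i * j) * l) (hRL (Submodule.mul_mem_mul (hcR' _ hr) hl))
      rw [map_mul c, hc] at h
      convert h using 2
      rw [map_mul c]
      ring
    | add a _ b _ ha hb =>
      have h := Submodule.add_mem _ ha hb
      rw [← map_add] at h
      convert h using 2
      rw [map_add c]
      ring
end

section
/- Let R ⊆ K be a subring with c(R) = R, and let b, b′ be ℤ-submodules of K satisfying R·b ⊆ b, R·b′ ⊆ b′, b·b′ = R, and c(b) = b. If the dual of R satisfies R* = b^{2k} for some integer k ≥ 0 (where b^{2k} denotes the 2k-fold product of b with itself, with b^0 = R), then b^k is self-dual: (b^k)* = b^k. -/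
/-- Let `K` be a number field, `c` a `ℚ`-algebra involution of `K`,
`λ ∈ K` nonzero.  Let `R ⊆ K` be a subring with `c(R) = R`, and `b, b′` `ℤ`-submodules
with `R·b ⊆ b`, `R·b′ ⊆ b′`, `b·b′ = R`, `c(b) = b`.  If `R* = b^{2k}` for some `k ≥ 0`
(powers taken with the convention `b⁰ = R`, encoded as `R * b ^ n`), then `b^k` is
self-dual: `(b^k)* = b^k`. -/
theorem stmt9 (K : Type*) [Field K] [NumberField K]
    (c : K →ₐ[ℚ] K) (hc : ∀ x : K, c (c x) = x) (lam : K) (hlam : lam ≠ 0)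
    (R : Submodule ℤ K) (hR1 : (1 : K) ∈ R) (hRmul : R * R ≤ R)
    (hcR : R.map (c.toLinearMap.restrictScalars ℤ) = R)
    (b b' : Submodule ℤ K)
    (hRb : R * b ≤ b) (hRb' : R * b' ≤ b')
    (hbb' : b * b' = R)
    (hcb : b.map (c.toLinearMap.restrictScalars ℤ) = b)
    (kk : ℕ)
    (hdualR : dualLattice K c lam R = R * b ^ (2 * kk)) :
    dualLattice K c lam (R * b ^ kk) = R * b ^ kk := by
  have hRR : R * R = R := by
    refine le_antisymm hRmul fun x hx => ?_
    simpa using Submodule.mul_mem_mul hx hR1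
  have hRpow : ∀ n : ℕ, R * R ^ n = R := by
    intro n
    induction n with
    | zero => simp
    | succ n ih => rw [pow_succ, ← mul_assoc, ih, hRR]
  have hcpow : ∀ n : ℕ, ∀ y ∈ b ^ n, c y ∈ b ^ n := by
    intro n
    induction n with
    | zero =>
      intro y hy
      rw [pow_zero, Submodule.mem_one] at hy ⊢
      obtain ⟨z, rfl⟩ := hy
      exact ⟨z, by simp⟩
    | succ n ih =>
      intro y hy
      rw [pow_succ] at hy ⊢
      induction hy using Submodule.mul_induction_on' with
      | mem_mul_mem m hm n hn =>
        rw [map_mul]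
        refine Submodule.mul_mem_mul (ih m hm) ?_
        rw [← hcb]
        exact Submodule.mem_map_of_mem (f := c.toLinearMap.restrictScalars ℤ) hn
      | add x _ y _ hx hy => rw [map_add]; exact add_mem hx hy
  have hcB : ∀ y ∈ R * b ^ kk, c y ∈ R * b ^ kk := by
    intro y hy
    induction hy using Submodule.mul_induction_on' with
    | mem_mul_mem m hm n hn =>
      rw [map_mul]
      refine Submodule.mul_mem_mul ?_ (hcpow kk n hn)
      rw [← hcR]
      exact Submodule.mem_map_of_mem (f := c.toLinearMap.restrictScalars ℤ) hm
    | add x _ y _ hx hy => rw [map_add]; exact add_mem hx hy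
  have hBB : (R * b ^ kk) * (R * b ^ kk) = R * b ^ (2 * kk) := by
    rw [mul_mul_mul_comm, hRR, ← pow_add, two_mul]
  have hBinv : (R * b ^ kk) * b' ^ kk = R := by
    rw [mul_assoc, ← mul_pow, hbb', hRpow]
  apply le_antisymm
  · intro x hx
    rw [mem_dualLattice_iff] at hx
    have h1 : ∀ y ∈ R * b ^ kk, x * y ∈ R * b ^ (2 * kk) := by
      intro y hy
      rw [← hdualR, mem_dualLattice_iff]
      intro r hr
      have h2 : r * c y ∈ R * b ^ kk := by
        have := Submodule.mul_mem_mul hr (hcB y hy)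
        rwa [← mul_assoc, hRR] at this
      have h3 := hx _ h2
      rw [map_mul c, hc] at h3
      convert h3 using 2
      ring
    have h4 : ∀ z ∈ (R * b ^ kk) * b' ^ kk, x * z ∈ R * b ^ kk := by
      intro z hz
      induction hz using Submodule.mul_induction_on' with
      | mem_mul_mem m hm n hn =>
        rw [← mul_assoc]
        have := Submodule.mul_mem_mul (h1 m hm) hn
        have e : R * b ^ (2 * kk) * b' ^ kk = R * b ^ kk := by
          rw [← hBB, mul_assoc, hBinv, mul_right_comm, hRR]
        rwa [e] at this
      | add u _ v _ hu hv => rw [mul_add]; exact add_mem hu hv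
    simpa using h4 1 (by rw [hBinv]; exact hR1)
  · intro x hx
    rw [mem_dualLattice_iff]
    intro y hy
    have h := Submodule.mul_mem_mul (hcB y hy) hx
    rw [hBB, ← hdualR, mem_dualLattice_iff] at h
    have := h 1 hR1
    rwa [map_one, mul_one, ← mul_assoc] at this
end

section
/- If e ≤ p − 1, then for every x ∈ m_L and every integer n ≥ 1, the element x^n / n! of L lies in m_L. (In particular, the maximal ideal of the ring of integers of a slightly ramified extension of ℚ_p is closed under divided powers.) -/
set_option synthInstance.maxHeartbeats 1000000 in
/-- Let `p` be a prime, `L` a finite extension of `ℚ_p`, `O_L` the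
integral closure of `ℤ_p` in `L`, `m` the maximal ideal of `O_L`, and `e` the ramification
index, i.e. `p·O_L = m^e`.  If `e ≤ p - 1`, then for every `x ∈ m` and every `n ≥ 1` the
element `xⁿ/n!` of `L` lies in `m` (division-free: there is `y ∈ m` with `n!·y = xⁿ`). -/
theorem stmt10 (p : ℕ) [Fact p.Prime]
    (L : Type*) [Field L] [Algebra ℚ_[p] L] [FiniteDimensional ℚ_[p] L]
    [Algebra ℤ_[p] L] [IsScalarTower ℤ_[p] ℚ_[p] L]
    (m : Ideal (integralClosure ℤ_[p] L)) (hm : m.IsMaximal)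
    (e : ℕ)
    (he : Ideal.span {(p : integralClosure ℤ_[p] L)} = m ^ e)
    (hep : e ≤ p - 1) :
    ∀ x : integralClosure ℤ_[p] L, x ∈ m → ∀ n : ℕ, 1 ≤ n →
      ∃ y ∈ m, ((n.factorial : L) * (y : L) = (x : L) ^ n) := by
  intro x hx n hn
  have hp : p.Prime := Fact.out
  obtain ⟨k, hk⟩ : p ^ padicValNat p n.factorial ∣ n.factorial := pow_padicValNat_dvd
  set v := padicValNat p n.factorial with hv
  have hlt : (p - 1) * v < n := sub_one_mul_padicValNat_factorial_lt_of_ne_zero p (by omega)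
  have hpk : ¬ p ∣ k := by
    rintro ⟨c, rfl⟩
    refine pow_succ_padicValNat_not_dvd (p := p) (Nat.factorial_ne_zero n) ⟨c, ?_⟩
    rw [← hv, hk, pow_succ]
    ring
  have hku : IsUnit (k : ℤ_[p]) := by
    rw [PadicInt.isUnit_iff]
    rcases lt_or_eq_of_le (PadicInt.norm_le_one (k : ℤ_[p])) with h | h
    · exact absurd (by exact_mod_cast (PadicInt.norm_int_lt_one_iff_dvd (p := p) (k : ℤ)).1 (by exact_mod_cast h)) hpk
    · exact h
  obtain ⟨w, hw⟩ := hku.exists_right_inv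
  have hw' : (k : integralClosure ℤ_[p] L) * algebraMap ℤ_[p] (integralClosure ℤ_[p] L) w = 1 := by
    rw [← map_natCast (algebraMap ℤ_[p] (integralClosure ℤ_[p] L)) k, ← map_mul, hw, map_one]
  have hev : e * v ≤ n - 1 := by
    have := Nat.mul_le_mul_right v hep
    omega
  have hmem : x ^ (n - 1) ∈ Ideal.span {(p : integralClosure ℤ_[p] L) ^ v} := by
    rw [← Ideal.span_singleton_pow, he, ← pow_mul]
    exact Ideal.pow_le_pow_right hev (Ideal.pow_mem_pow hx _)
  obtain ⟨z, hz⟩ := Ideal.mem_span_singleton'.1 hmem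
  refine ⟨x * (z * algebraMap ℤ_[p] (integralClosure ℤ_[p] L) w), m.mul_mem_right _ hx, ?_⟩
  have key : (n.factorial : integralClosure ℤ_[p] L) *
      (x * (z * algebraMap ℤ_[p] (integralClosure ℤ_[p] L) w)) = x ^ n := by
    obtain ⟨r, rfl⟩ : ∃ r, n = r + 1 := ⟨n - 1, by omega⟩
    rw [Nat.add_sub_cancel] at hz
    rw [hk, pow_succ, ← hz]
    push_cast
    linear_combination ((p : integralClosure ℤ_[p] L) ^ v * x * z) * hw'
  exact_mod_cast congrArg (Subtype.val) key
end
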